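/- Let w ≈ 1.278 be the unique solution of (w−1)·e^w = 1. For any two independent single-item distributions D1, D2 on [0,∞), the supremum revenue over all deterministic two-item menus satisfies DRev(D1 × D2) ≤ w · (r1 + r2), where r_i is the optimal single-item revenue for D_i. In particular DRev ≤ w · SRev. -/

import Mathlib

open MeasureTheory

/-- Payment made by a utility-maximizing additive buyer with values `(v1, v2)` facing the
deterministic menu charging `a` for item 1, `b` for item 2, `c` for the pair;
ties are broken in favor of the higher payment. -/
noncomputable def pay (a b c v1 v2 : ℝ) : ℝ :=
  let u1 := v1 - a
  let u2 := v2 - b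
  let u12 := v1 + v2 - c
  let m := max (max 0 u1) (max u2 u12)
  max (if u1 = m then a else 0) (max (if u2 = m then b else 0) (if u12 = m then c else 0))

/-- Expected revenue of the menu `(a, b, c)` when values are drawn from `μ`. -/
noncomputable def rev (μ : Measure (ℝ × ℝ)) (a b c : ℝ) : ℝ :=
  ∫ v, pay a b c v.1 v.2 ∂μ

/-!
Condition on the value `v` of the first item. Given `v`, the buyer faces what amounts to a single
posted price for adding the second item, so the conditional revenue exceeds `r2` by at most a
monotone, explicit function of `v`: zero for low `v`, then `r2 * v / (c - v)`, then constant.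
The expectation of a monotone function only grows when `D1` is replaced by the equal-revenue
distribution, which stochastically dominates it. Against the equal-revenue density `r1 / v ^ 2` the
expectation is an explicit combination of two logarithms, and the tangent line of `log` at `exp w`
bounds both at once.
-/

open Set

section Comparison

theorem integral_le_add_mul_measureReal {α : Type*} [MeasurableSpace α] {μ : Measure α}
    [IsProbabilityMeasure μ] {f : α → ℝ} (hf : 0 ≤ f) {s : Set α} (hs : MeasurableSet s)
    {A B : ℝ} (h : ∀ v, f v ≤ A + s.indicator (fun _ => B) v) :
    ∫ v, f v ∂μ ≤ A + B * μ.real s := by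
  have hi : Integrable (s.indicator fun _ => B) μ := (integrable_const B).indicator hs
  calc ∫ v, f v ∂μ ≤ ∫ v, (A + s.indicator (fun _ => B) v) ∂μ :=
        integral_mono_of_nonneg (ae_of_all _ hf) ((integrable_const A).add hi) (ae_of_all _ h)
    _ = A + B * μ.real s := by
        simp [integral_add (integrable_const A) hi, integral_indicator_const _ hs, mul_comm]

theorem measure_le_of_isUpperSet {α : Type*} [LinearOrder α] [TopologicalSpace α]
    [ClosedIicTopology α] [MeasurableSpace α] {μ ν : Measure α} [μ.InnerRegular]
    (h : ∀ u, μ (Ici u) ≤ ν (Ici u)) {s : Set α} (hs : IsUpperSet s) (hsm : MeasurableSet s) :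
    μ s ≤ ν s := by
  rw [hsm.measure_eq_iSup_isCompact μ]
  refine iSup₂_le fun K hKs => iSup_le fun hK => ?_
  rcases K.eq_empty_or_nonempty with rfl | hne
  · simp
  obtain ⟨m, hm⟩ := hK.exists_isLeast hne
  calc μ K ≤ μ (Ici m) := measure_mono hm.2
    _ ≤ ν (Ici m) := h m
    _ ≤ ν s := measure_mono (hs.Ici_subset (hKs hm.1))

theorem integral_le_integral_of_monotone {α : Type*} [LinearOrder α] [TopologicalSpace α]
    [OrderClosedTopology α] [MeasurableSpace α] [BorelSpace α] {μ ν : Measure α} [μ.InnerRegular]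
    (h : ∀ u, μ (Ici u) ≤ ν (Ici u)) {g : α → ℝ} (hg : Monotone g) (hg0 : 0 ≤ g)
    (hgν : Integrable g ν) : ∫ v, g v ∂μ ≤ ∫ v, g v ∂ν := by
  have hgm : Measurable g := hg.measurable
  have hupper (t : ℝ) : IsUpperSet {v | t ≤ g v} := fun _ _ hvw hv => le_trans hv (hg hvw)
  have hle : ∫⁻ v, ENNReal.ofReal (g v) ∂μ ≤ ∫⁻ v, ENNReal.ofReal (g v) ∂ν := by
    rw [lintegral_eq_lintegral_meas_le μ (ae_of_all _ hg0) hgm.aemeasurable,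
      lintegral_eq_lintegral_meas_le ν (ae_of_all _ hg0) hgm.aemeasurable]
    exact lintegral_mono fun t =>
      measure_le_of_isUpperSet h (hupper t) (measurableSet_le measurable_const hgm)
  rw [integral_eq_lintegral_of_nonneg_ae (ae_of_all _ hg0) hgm.aestronglyMeasurable,
    integral_eq_lintegral_of_nonneg_ae (ae_of_all _ hg0) hgm.aestronglyMeasurable]
  exact ENNReal.toReal_mono hgν.lintegral_lt_top.ne hle

end Comparison

section EqualRevenue

/-- The equal-revenue distribution `ER_r`, with density `r / v ^ 2` on `[r, ∞)`: every price at
least `r` sells with revenue exactly `r`. -/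
noncomputable def equalRevenue (r : ℝ) : Measure ℝ :=
  (volume.restrict (Ici r)).withDensity fun v => ENNReal.ofReal (r / v ^ 2)

theorem setLIntegral_Ici_div_sq {r u : ℝ} (hr : 0 ≤ r) (hu : 0 < u) :
    ∫⁻ v in Ici u, ENNReal.ofReal (r / v ^ 2) = ENNReal.ofReal (r / u) := by
  have hderiv : ∀ v ∈ Ici u, HasDerivAt (fun v => -(r / v)) (r / v ^ 2) v := fun v hv =>
    (((hasDerivAt_inv (hu.trans_le hv).ne').const_mul r).neg).congr_deriv (by ring)
  have hnonneg : ∀ v ∈ Ioi u, 0 ≤ r / v ^ 2 := fun v _ => by positivity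
  have hlim : Filter.Tendsto (fun v : ℝ => -(r / v)) Filter.atTop (nhds (-0)) :=
    (Filter.tendsto_id.const_div_atTop r).neg
  rw [← setLIntegral_congr Ioi_ae_eq_Ici, ← ofReal_integral_eq_lintegral_ofReal
      (integrableOn_Ioi_deriv_of_nonneg' hderiv hnonneg hlim)
      (ae_restrict_of_forall_mem measurableSet_Ioi hnonneg),
    integral_Ioi_of_hasDerivAt_of_nonneg' hderiv hnonneg hlim]
  simp

variable {r : ℝ}

theorem equalRevenue_Ici (hr : 0 < r) (u : ℝ) :
    equalRevenue r (Ici u) = ENNReal.ofReal (r / max u r) := by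
  rw [equalRevenue, withDensity_apply _ measurableSet_Ici,
    Measure.restrict_restrict measurableSet_Ici, Ici_inter_Ici,
    setLIntegral_Ici_div_sq hr.le (lt_max_of_lt_right hr)]

theorem isProbabilityMeasure_equalRevenue (hr : 0 < r) :
    IsProbabilityMeasure (equalRevenue r) := by
  constructor
  rw [equalRevenue, withDensity_apply _ .univ, Measure.restrict_univ,
    setLIntegral_Ici_div_sq hr.le hr, div_self hr.ne', ENNReal.ofReal_one]

theorem measure_Ici_le_equalRevenue {μ : Measure ℝ} [IsProbabilityMeasure μ] (hr : 0 < r)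
    (hμ : ∀ p, 0 ≤ p → p * μ.real (Ici p) ≤ r) (u : ℝ) :
    μ (Ici u) ≤ equalRevenue r (Ici u) := by
  rw [equalRevenue_Ici hr, ← ofReal_measureReal]
  refine ENNReal.ofReal_le_ofReal ((le_div_iff₀' (lt_max_of_lt_right hr)).2 ?_)
  rcases le_total u r with hur | hru
  · rw [max_eq_right hur]
    exact mul_le_of_le_one_right hr.le measureReal_le_one
  · rw [max_eq_left hru]
    exact hμ u (hr.le.trans hru)

theorem setIntegral_Ico_equalRevenue (hr : 0 ≤ r) {s t : ℝ} (ht : max s r ≤ t) (g : ℝ → ℝ) :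
    ∫ v in Ico s t, g v ∂equalRevenue r = ∫ v in max s r..t, r / v ^ 2 * g v := by
  rw [equalRevenue, setIntegral_withDensity_eq_setIntegral_toReal_smul (by fun_prop)
      (ae_of_all _ fun _ => ENNReal.ofReal_lt_top) _ measurableSet_Ico,
    Measure.restrict_restrict measurableSet_Ico, Ico_inter_Ici, integral_Ico_eq_integral_Ioc,
    intervalIntegral.integral_of_le ht]
  simp_rw [ENNReal.toReal_ofReal (div_nonneg hr (sq_nonneg _)), smul_eq_mul]

end EqualRevenue

section Logarithms

variable {w x y c m t : ℝ}

theorem integral_inv_mul_sub (hm : 0 < m) (hmt : m ≤ t) (htc : t < c) :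
    ∫ v in m..t, c / (v * (c - v)) = Real.log (t / (c - t)) + Real.log ((c - m) / m) := by
  have hpos : ∀ v ∈ uIcc m t, 0 < v ∧ 0 < c - v := fun v hv => by
    rw [uIcc_of_le hmt] at hv
    exact ⟨hm.trans_le hv.1, by linarith [hv.2]⟩
  have hderiv : ∀ v ∈ uIcc m t,
      HasDerivAt (fun v => Real.log v - Real.log (c - v)) (c / (v * (c - v))) v := fun v hv => by
    obtain ⟨hv0, hvc⟩ := hpos v hv
    refine ((Real.hasDerivAt_log hv0.ne').sub
      (((hasDerivAt_id v).const_sub c).log hvc.ne')).congr_deriv ?_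
    simp only [id]
    field_simp
    ring
  have hcont : ContinuousOn (fun v => c / (v * (c - v))) (uIcc m t) :=
    continuousOn_const.div (by fun_prop) fun v hv => (mul_pos (hpos v hv).1 (hpos v hv).2).ne'
  rw [intervalIntegral.integral_eq_sub_of_hasDerivAt hderiv hcont.intervalIntegrable,
    Real.log_div (by linarith) (by linarith), Real.log_div (by linarith) (by linarith)]
  ring

theorem log_le_of_mul_exp_eq_one {u : ℝ} (hw : (w - 1) * Real.exp w = 1) (hu : 0 < u) :
    Real.log u ≤ (w - 1) * (1 + u) := by
  have hexp : Real.exp (-w) = w - 1 := by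
    rw [Real.exp_neg, eq_inv_of_mul_eq_one_left hw]
  have htangent := Real.log_le_sub_one_of_pos (mul_pos hu (Real.exp_pos (-w)))
  rw [Real.log_mul hu.ne' (Real.exp_pos _).ne', Real.log_exp, hexp] at htangent
  linarith

theorem one_lt_of_mul_exp_eq_one (hw : (w - 1) * Real.exp w = 1) : 1 < w :=
  sub_pos.1 ((mul_pos_iff_of_pos_right (Real.exp_pos w)).1 (one_pos.trans_eq hw.symm))

theorem mul_log_add_log_le (hw : (w - 1) * Real.exp w = 1) (hx : 0 < x) (hy : 0 < y)
    (hxm : x ≤ m) (hmt : m ≤ t) (htc : t ≤ c - y) :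
    x * y / c * (Real.log (t / (c - t)) + Real.log ((c - m) / m)) ≤ (w - 1) * (x + y) := by
  have hm : 0 < m := hx.trans_le hxm
  have ht : 0 < t := hm.trans_le hmt
  have hct : 0 < c - t := by linarith
  have hcm : 0 < c - m := by linarith
  have hc : 0 < c := by linarith
  have hw1 : 0 ≤ w - 1 := sub_nonneg.2 (one_lt_of_mul_exp_eq_one hw).le
  calc x * y / c * (Real.log (t / (c - t)) + Real.log ((c - m) / m))
      ≤ x * y / c * ((w - 1) * (1 + t / (c - t)) + (w - 1) * (1 + (c - m) / m)) := by
        gcongr <;> exact log_le_of_mul_exp_eq_one hw (by positivity)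
    _ = (w - 1) * (x * (y / (c - t)) + y * (x / m)) := by field_simp; ring
    _ ≤ (w - 1) * (x * 1 + y * 1) := by
        gcongr
        · exact (div_le_one hct).2 (by linarith)
        · exact (div_le_one hm).2 hxm
    _ = (w - 1) * (x + y) := by ring

end Logarithms

section ExcessProfile

/-- Upper bound for how far the revenue conditional on the first value `v` can exceed the
single-item revenue `y` of the second item, for a menu with bundle price `c`: the first item
influences the price of the second from `s` on, and is sold alone from `t` on. -/
noncomputable def excessProfile (y c s t v : ℝ) : ℝ :=
  if v < s then 0 else if v < t then y * v / (c - v) else t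

variable {x y c s t v : ℝ}

theorem excessProfile_nonneg (hy : 0 ≤ y) (hs : 0 ≤ s) (ht : 0 ≤ t) (htc : t ≤ c) :
    0 ≤ excessProfile y c s t v := by
  unfold excessProfile
  split_ifs with hvs hvt
  · exact le_rfl
  · exact div_nonneg (mul_nonneg hy (by linarith)) (by linarith)
  · exact ht

theorem excessProfile_le (hy : 0 ≤ y) (ht : 0 ≤ t) (htc : t ≤ c - y) :
    excessProfile y c s t v ≤ t := by
  unfold excessProfile
  split_ifs with hvs hvt
  · exact ht
  · rw [div_le_iff₀ (by linarith)]
    nlinarith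
  · exact le_rfl

theorem monotone_excessProfile (hy : 0 ≤ y) (hs : 0 ≤ s) (ht : 0 ≤ t) (htc : t ≤ c - y) :
    Monotone (excessProfile y c s t) := by
  intro v v' hvv'
  rcases lt_or_ge v s with hvs | hsv
  · rw [excessProfile, if_pos hvs]
    exact excessProfile_nonneg hy hs ht (by linarith)
  rcases lt_or_ge v' t with hvt' | htv'
  · simp only [excessProfile, hsv.not_gt, (hsv.trans hvv').not_gt, hvt', hvv'.trans_lt hvt',
      if_true, if_false]
    gcongr
    · exact mul_nonneg hy (by linarith)
    · linarith
  · refine (excessProfile_le hy ht htc).trans_eq ?_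
    rw [excessProfile, if_neg (hsv.trans hvv').not_gt, if_neg htv'.not_gt]

theorem integrable_excessProfile {μ : Measure ℝ} [IsFiniteMeasure μ] (hy : 0 ≤ y) (hs : 0 ≤ s)
    (ht : 0 ≤ t) (htc : t ≤ c - y) : Integrable (excessProfile y c s t) μ := by
  refine .of_bound (monotone_excessProfile hy hs ht htc).measurable.aestronglyMeasurable t
    (ae_of_all _ fun v => ?_)
  rw [Real.norm_of_nonneg (excessProfile_nonneg hy hs ht (by linarith))]
  exact excessProfile_le hy ht htc

theorem integral_equalRevenue_excessProfile (hx : 0 < x) (hy : 0 ≤ y) (hs : 0 ≤ s)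
    (hst : s ≤ t) (hxt : x ≤ t) (htc : t ≤ c - y) :
    ∫ v, excessProfile y c s t v ∂equalRevenue x =
      (∫ v in max s x..t, x / v ^ 2 * (y * v / (c - v))) + x := by
  have := isProbabilityMeasure_equalRevenue hx
  have ht : 0 < t := hx.trans_le hxt
  have hlow : ∫ v in Iio t, excessProfile y c s t v ∂equalRevenue x =
      ∫ v in max s x..t, x / v ^ 2 * (y * v / (c - v)) := by
    rw [← setIntegral_Ico_equalRevenue hx.le (max_le hst hxt),
      setIntegral_eq_of_subset_of_forall_sdiff_eq_zero measurableSet_Iio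
        (s := Ico s t) Ico_subset_Iio_self]
    · refine setIntegral_congr_fun measurableSet_Ico fun v hv => ?_
      simp only [excessProfile, hv.1.not_gt, hv.2, if_true, if_false]
    · intro v hv
      exact if_pos (not_le.1 fun hsv => hv.2 ⟨hsv, hv.1⟩)
  have hhigh : ∫ v in Ici t, excessProfile y c s t v ∂equalRevenue x = x := by
    calc ∫ v in Ici t, excessProfile y c s t v ∂equalRevenue x
        = ∫ _ in Ici t, t ∂equalRevenue x := by
          refine setIntegral_congr_fun measurableSet_Ici fun v hv => ?_
          simp only [excessProfile, (hst.trans hv).not_gt, (mem_Ici.1 hv).not_gt, if_false]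
      _ = x := by
          rw [setIntegral_const, measureReal_def, equalRevenue_Ici hx, max_eq_left hxt,
            ENNReal.toReal_ofReal (by positivity), smul_eq_mul, div_mul_cancel₀ _ ht.ne']
  have hint := integrable_excessProfile (μ := equalRevenue x) hy hs ht.le htc
  rw [← integral_add_compl measurableSet_Iio hint, compl_Iio, hlow, hhigh]

theorem integral_equalRevenue_excessProfile_le {w : ℝ} (hw : (w - 1) * Real.exp w = 1)
    (hx : 0 < x) (hy : 0 < y) (hs : 0 ≤ s) (hst : s ≤ t) (htc : t ≤ c - y) :
    ∫ v, excessProfile y c s t v ∂equalRevenue x ≤ x + (w - 1) * (x + y) := by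
  have := isProbabilityMeasure_equalRevenue hx
  have hw1 := one_lt_of_mul_exp_eq_one hw
  rcases lt_or_ge t x with htx | hxt
  · calc ∫ v, excessProfile y c s t v ∂equalRevenue x ≤ ∫ _, t ∂equalRevenue x :=
          integral_mono (integrable_excessProfile hy.le hs (hs.trans hst) htc)
            (integrable_const t) fun v => excessProfile_le hy.le (hs.trans hst) htc
      _ = t := by simp
      _ ≤ x := htx.le
      _ ≤ x + (w - 1) * (x + y) :=
          le_add_of_nonneg_right (mul_nonneg (sub_pos.2 hw1).le (add_pos hx hy).le)
  have hm : 0 < max s x := lt_max_of_lt_right hx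
  have hmt : max s x ≤ t := max_le hst hxt
  have hintegrand : ∀ v ∈ uIcc (max s x) t,
      x / v ^ 2 * (y * v / (c - v)) = x * y / c * (c / (v * (c - v))) := fun v hv => by
    rw [uIcc_of_le hmt] at hv
    have hv0 : 0 < v := hm.trans_le hv.1
    have hcv : 0 < c - v := by linarith [hv.2]
    have hc : 0 < c := by linarith
    field_simp
  rw [integral_equalRevenue_excessProfile hx hy.le hs hst hxt htc,
    intervalIntegral.integral_congr hintegrand, intervalIntegral.integral_const_mul,
    integral_inv_mul_sub hm hmt (by linarith), add_comm]
  exact add_le_add_right (mul_log_add_log_le hw hx hy (le_max_right s x) hmt htc) x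

end ExcessProfile

section PointwisePayment

variable {a b c v1 v2 : ℝ}

theorem pay_le {M : ℝ} (hM : 0 ≤ M)
    (ha : 0 ≤ v1 - a → v2 - b ≤ v1 - a → v1 + v2 - c ≤ v1 - a → a ≤ M)
    (hb : 0 ≤ v2 - b → v1 - a ≤ v2 - b → v1 + v2 - c ≤ v2 - b → b ≤ M)
    (hc : 0 ≤ v1 + v2 - c → v1 - a ≤ v1 + v2 - c → v2 - b ≤ v1 + v2 - c → c ≤ M) :
    pay a b c v1 v2 ≤ M := by
  have chosen_le {u A : ℝ} (hA : 0 ≤ u → v1 - a ≤ u → v2 - b ≤ u → v1 + v2 - c ≤ u → A ≤ M) :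
      (if u = max (max 0 (v1 - a)) (max (v2 - b) (v1 + v2 - c)) then A else 0) ≤ M := by
    split_ifs with hu
    · exact hA (by simp [hu]) (by simp [hu]) (by simp [hu]) (by simp [hu])
    · exact hM
  exact max_le (chosen_le fun h0 _ h2 h12 => ha h0 h2 h12)
    (max_le (chosen_le fun h0 h1 _ h12 => hb h0 h1 h12)
      (chosen_le fun h0 h1 h2 _ => hc h0 h1 h2))

theorem pay_nonneg (ha : 0 ≤ a) : 0 ≤ pay a b c v1 v2 := by
  refine le_max_of_le_left ?_
  split_ifs <;> simp [ha]

theorem pay_le_bundle_price (ha : 0 ≤ a) (hac : a ≤ c) (hbc : b ≤ c) :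
    pay a b c v1 v2 ≤ c :=
  pay_le (ha.trans hac) (fun _ _ _ => hac) (fun _ _ _ => hbc) (fun _ _ _ => le_rfl)

theorem pay_le_of_lt_sub (ha : 0 ≤ a) (hb : 0 ≤ b) (hv : v1 < c - b) :
    pay a b c v1 v2 ≤ (Ici a).indicator (fun _ => a) v1 + (Ici b).indicator (fun _ => b) v2 := by
  simp only [indicator_apply, mem_Ici]
  apply pay_le <;> grind

theorem pay_le_of_sub_le_of_lt (hc : 0 ≤ c) (hbc : b ≤ c) (hbv : c - b ≤ v1)
    (hva : v1 < a) :
    pay a b c v1 v2 ≤ (Ici (c - v1)).indicator (fun _ => c) v2 := by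
  simp only [indicator_apply, mem_Ici]
  apply pay_le <;> grind

theorem pay_le_of_sub_le (ha : 0 ≤ a) (hac : a ≤ c) (hbc : b ≤ c) (hbv : c - b ≤ v1) :
    pay a b c v1 v2 ≤ a + (Ici (c - a)).indicator (fun _ => c - a) v2 := by
  simp only [indicator_apply, mem_Ici]
  apply pay_le <;> grind

theorem pay_swap (a b c v1 v2 : ℝ) : pay a b c v1 v2 = pay b a c v2 v1 := by
  simp only [pay, add_comm v1 v2, max_comm, max_left_comm, max_assoc]

theorem le_pay_of_free_second {p : ℝ} (hp : p ≤ v1) : p ≤ pay p 0 p v1 v2 := by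
  simp only [pay]
  grind

end PointwisePayment

section Revenue

variable {a b c : ℝ}

theorem measurable_pay (a b c : ℝ) : Measurable fun v : ℝ × ℝ => pay a b c v.1 v.2 := by
  refine Measurable.max ?_ (Measurable.max ?_ ?_) <;>
    exact Measurable.ite (measurableSet_eq_fun (by fun_prop) (by fun_prop))
      measurable_const measurable_const

theorem integrable_pay {μ : Measure (ℝ × ℝ)} [IsFiniteMeasure μ] (ha : 0 ≤ a)
    (hac : a ≤ c) (hbc : b ≤ c) : Integrable (fun v : ℝ × ℝ => pay a b c v.1 v.2) μ := by
  refine .of_bound (measurable_pay a b c).aestronglyMeasurable c (ae_of_all _ fun v => ?_)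
  rw [Real.norm_of_nonneg (pay_nonneg ha)]
  exact pay_le_bundle_price ha hac hbc

theorem rev_prod_swap (μ1 μ2 : Measure ℝ) [SFinite μ1] [SFinite μ2] (a b c : ℝ) :
    rev (μ1.prod μ2) a b c = rev (μ2.prod μ1) b a c := by
  rw [rev, ← integral_prod_swap]
  simp only [rev, Prod.fst_swap, Prod.snd_swap, pay_swap a b c]

theorem mul_measureReal_Ici_le_rev (μ1 μ2 : Measure ℝ) [IsFiniteMeasure μ1]
    [IsProbabilityMeasure μ2] {p : ℝ} (hp : 0 ≤ p) :
    p * μ1.real (Ici p) ≤ rev (μ1.prod μ2) p 0 p := by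
  have hS : MeasurableSet (Ici p ×ˢ (univ : Set ℝ)) := measurableSet_Ici.prod .univ
  calc p * μ1.real (Ici p)
      = ∫ v, (Ici p ×ˢ (univ : Set ℝ)).indicator (fun _ => p) v ∂μ1.prod μ2 := by
        simp [integral_indicator_const _ hS, measureReal_prod_prod, mul_comm]
    _ ≤ rev (μ1.prod μ2) p 0 p :=
        integral_mono ((integrable_const p).indicator hS) (integrable_pay hp le_rfl hp)
          (indicator_le' (fun _ hv => le_pay_of_free_second hv.1) fun _ _ => pay_nonneg hp)

/-- The set of revenues `p * ℙ[v ≥ p]` from posting a price for one item; the paper's `r_i` is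
its supremum. -/
def priceRevenues (μ : Measure ℝ) : Set ℝ :=
  {x : ℝ | ∃ p : ℝ, 0 ≤ p ∧ x = p * (μ (Ici p)).toReal}

/-- The set of revenues of deterministic menus, whose supremum is `DRev`. Only
monotone menus are included; by the paper they suffice. -/
def menuRevenues (μ : Measure (ℝ × ℝ)) : Set ℝ :=
  {r : ℝ | ∃ a b c : ℝ, 0 ≤ a ∧ 0 ≤ b ∧ max a b ≤ c ∧ r = rev μ a b c}

theorem sSup_priceRevenues_nonneg (μ : Measure ℝ) : 0 ≤ sSup (priceRevenues μ) :=
  Real.sSup_nonneg (by rintro _ ⟨p, hp, rfl⟩; positivity)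

variable {μ1 μ2 : Measure ℝ} [IsProbabilityMeasure μ1] [IsProbabilityMeasure μ2]

theorem bddAbove_priceRevenues_fst (h : BddAbove (menuRevenues (μ1.prod μ2))) :
    BddAbove (priceRevenues μ1) := by
  obtain ⟨M, hM⟩ := h
  refine ⟨M, ?_⟩
  rintro _ ⟨p, hp, rfl⟩
  exact (mul_measureReal_Ici_le_rev μ1 μ2 hp).trans
    (hM ⟨p, 0, p, hp, le_rfl, max_le le_rfl hp, rfl⟩)

theorem menuRevenues_prod_swap (μ1 μ2 : Measure ℝ) [SFinite μ1] [SFinite μ2] :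
    menuRevenues (μ2.prod μ1) = menuRevenues (μ1.prod μ2) := by
  ext r
  constructor <;> rintro ⟨a, b, c, ha, hb, hc, rfl⟩ <;>
    exact ⟨b, a, c, hb, ha, max_comm a b ▸ hc, rev_prod_swap _ _ a b c⟩

theorem bddAbove_priceRevenues_snd (h : BddAbove (menuRevenues (μ1.prod μ2))) :
    BddAbove (priceRevenues μ2) :=
  bddAbove_priceRevenues_fst (μ2 := μ1) (by rwa [menuRevenues_prod_swap])

end Revenue

section ConditionalRevenue

/-- Expected payment conditional on the first value being `v`, when the second is drawn
from `μ`. -/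
noncomputable def condRev (μ : Measure ℝ) (a b c v : ℝ) : ℝ :=
  ∫ v2, pay a b c v v2 ∂μ

theorem condRev_nonneg {μ : Measure ℝ} {a b c v : ℝ} (ha : 0 ≤ a) : 0 ≤ condRev μ a b c v :=
  integral_nonneg fun _ => pay_nonneg ha

theorem rev_prod {μ1 μ2 : Measure ℝ} [IsFiniteMeasure μ1] [IsFiniteMeasure μ2] {a b c : ℝ}
    (ha : 0 ≤ a) (hac : a ≤ c) (hbc : b ≤ c) :
    rev (μ1.prod μ2) a b c = ∫ v, condRev μ2 a b c v ∂μ1 :=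
  integral_prod _ (integrable_pay ha hac hbc)

variable {μ : Measure ℝ} [IsProbabilityMeasure μ] {a b c y v : ℝ}

theorem condRev_le_bundle_price (ha : 0 ≤ a) (hac : a ≤ c) (hbc : b ≤ c) :
    condRev μ a b c v ≤ c := by
  calc condRev μ a b c v ≤ ∫ _, c ∂μ :=
        integral_mono_of_nonneg (ae_of_all _ fun _ => pay_nonneg ha) (integrable_const c)
          (ae_of_all _ fun _ => pay_le_bundle_price ha hac hbc)
    _ = c := by simp

theorem condRev_le_of_lt_sub (hμ : ∀ p, 0 ≤ p → p * μ.real (Ici p) ≤ y) (ha : 0 ≤ a) (hb : 0 ≤ b)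
    (hv : v < c - b) : condRev μ a b c v ≤ y + (Ici a).indicator (fun _ => a) v := by
  have := integral_le_add_mul_measureReal (μ := μ) (fun _ => pay_nonneg ha) measurableSet_Ici
    fun v2 => pay_le_of_lt_sub (v2 := v2) ha hb hv
  rw [condRev]
  linarith [hμ b hb]

theorem condRev_le_of_sub_le_of_lt (hμ : ∀ p, 0 ≤ p → p * μ.real (Ici p) ≤ y) (ha : 0 ≤ a)
    (hac : a ≤ c) (hbc : b ≤ c) (hbv : c - b ≤ v) (hva : v < a) :
    condRev μ a b c v ≤ y + y * v / (c - v) := by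
  have hcv : 0 < c - v := by linarith
  have hc : 0 ≤ c := ha.trans hac
  calc condRev μ a b c v ≤ 0 + c * μ.real (Ici (c - v)) :=
        integral_le_add_mul_measureReal (fun _ => pay_nonneg ha) measurableSet_Ici fun v2 => by
          simpa using pay_le_of_sub_le_of_lt hc hbc hbv hva
    _ ≤ 0 + c * (y / (c - v)) := by
        gcongr
        exact (le_div_iff₀' hcv).2 (hμ _ hcv.le)
    _ = y + y * v / (c - v) := by field_simp; ring

theorem condRev_le_of_sub_le (hμ : ∀ p, 0 ≤ p → p * μ.real (Ici p) ≤ y) (ha : 0 ≤ a)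
    (hac : a ≤ c) (hbc : b ≤ c) (hbv : c - b ≤ v) : condRev μ a b c v ≤ y + a := by
  have := integral_le_add_mul_measureReal (μ := μ) (fun _ => pay_nonneg ha) measurableSet_Ici
    fun v2 => pay_le_of_sub_le (v2 := v2) ha hac hbc hbv
  rw [condRev]
  linarith [hμ (c - a) (sub_nonneg.2 hac)]

-- Capping `t` at `c - y` keeps `c - v ≥ y` on the middle range, at no loss since payments never
-- exceed `c`; capping `s` at `t` absorbs the menus with `a + b < c`, whose middle range is empty.
theorem condRev_le_add_excessProfile (hμ : ∀ p, 0 ≤ p → p * μ.real (Ici p) ≤ y) (ha : 0 ≤ a)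
    (hb : 0 ≤ b) (hac : a ≤ c) (hbc : b ≤ c) :
    condRev μ a b c v ≤
      y + excessProfile y c (min (c - b) (min a (c - y))) (min a (c - y)) v := by
  unfold excessProfile
  split_ifs with hvs hvt
  · obtain ⟨hvb, hva, -⟩ : v < c - b ∧ v < a ∧ v < c - y := by simpa using hvs
    simpa [hva] using condRev_le_of_lt_sub hμ ha hb hvb
  · have hbv : c - b ≤ v := not_lt.1 fun h => hvs (lt_min h hvt)
    exact condRev_le_of_sub_le_of_lt hμ ha hac hbc hbv (hvt.trans_le (min_le_left _ _))
  · rcases le_total a (c - y) with h | h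
    · rw [min_eq_left h]
      rcases lt_or_ge v (c - b) with hvb | hbv
      · exact (condRev_le_of_lt_sub hμ ha hb hvb).trans
          (add_le_add_right (indicator_le_self' (fun _ _ => ha) v) y)
      · exact condRev_le_of_sub_le hμ ha hac hbc hbv
    · rw [min_eq_right h]
      linarith [condRev_le_bundle_price (μ := μ) (v := v) ha hac hbc]

end ConditionalRevenue

section RevenueBound

variable {μ1 μ2 : Measure ℝ} [IsProbabilityMeasure μ1] [IsProbabilityMeasure μ2] {w x y a b c : ℝ}

theorem rev_prod_le_of_pos (hw : (w - 1) * Real.exp w = 1) (hx : 0 < x) (hy : 0 < y)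
    (hμ1 : ∀ p, 0 ≤ p → p * μ1.real (Ici p) ≤ x) (hμ2 : ∀ p, 0 ≤ p → p * μ2.real (Ici p) ≤ y)
    (ha : 0 ≤ a) (hb : 0 ≤ b) (hac : a ≤ c) (hbc : b ≤ c) :
    rev (μ1.prod μ2) a b c ≤ w * (x + y) := by
  have hw1 := one_lt_of_mul_exp_eq_one hw
  have hcond0 : 0 ≤ condRev μ2 a b c := fun _ => condRev_nonneg ha
  rw [rev_prod ha hac hbc]
  rcases lt_or_ge c y with hcy | hyc
  · calc ∫ v, condRev μ2 a b c v ∂μ1 ≤ ∫ _, c ∂μ1 :=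
          integral_mono_of_nonneg (ae_of_all _ hcond0) (integrable_const c)
            (ae_of_all _ fun _ => condRev_le_bundle_price ha hac hbc)
      _ = c := by simp
      _ ≤ x + y := by linarith
      _ ≤ w * (x + y) := le_mul_of_one_le_left (add_pos hx hy).le hw1.le
  set t := min a (c - y)
  set s := min (c - b) t
  have hst : s ≤ t := min_le_right _ _
  have htc : t ≤ c - y := min_le_right _ _
  have ht : 0 ≤ t := le_min ha (sub_nonneg.2 hyc)
  have hs : 0 ≤ s := le_min (sub_nonneg.2 hbc) ht
  have hint {μ : Measure ℝ} [IsFiniteMeasure μ] : Integrable (excessProfile y c s t) μ :=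
    integrable_excessProfile hy.le hs ht htc
  have := isProbabilityMeasure_equalRevenue hx
  calc ∫ v, condRev μ2 a b c v ∂μ1
      ≤ ∫ v, (y + excessProfile y c s t v) ∂μ1 :=
        integral_mono_of_nonneg (ae_of_all _ hcond0) ((integrable_const y).add hint)
          (ae_of_all _ fun v => condRev_le_add_excessProfile hμ2 ha hb hac hbc)
    _ = y + ∫ v, excessProfile y c s t v ∂μ1 := by
        simp [integral_add (integrable_const y) hint]
    _ ≤ y + ∫ v, excessProfile y c s t v ∂equalRevenue x :=
        add_le_add_right (integral_le_integral_of_monotone (measure_Ici_le_equalRevenue hx hμ1)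
          (monotone_excessProfile hy.le hs ht htc)
          (fun v => excessProfile_nonneg hy.le hs ht (by linarith)) hint) y
    _ ≤ y + (x + (w - 1) * (x + y)) :=
        add_le_add_right (integral_equalRevenue_excessProfile_le hw hx hy hs hst htc) y
    _ = w * (x + y) := by ring

theorem rev_prod_le (hw : (w - 1) * Real.exp w = 1)
    (hμ1 : ∀ p, 0 ≤ p → p * μ1.real (Ici p) ≤ x) (hμ2 : ∀ p, 0 ≤ p → p * μ2.real (Ici p) ≤ y)
    (ha : 0 ≤ a) (hb : 0 ≤ b) (hac : a ≤ c) (hbc : b ≤ c) :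
    rev (μ1.prod μ2) a b c ≤ w * (x + y) := by
  have hx : 0 ≤ x := by simpa using hμ1 0 le_rfl
  have hy : 0 ≤ y := by simpa using hμ2 0 le_rfl
  have hlim : Filter.Tendsto (fun δ => w * ((x + δ) + (y + δ))) (nhdsWithin 0 (Ioi 0))
      (nhds (w * (x + y))) :=
    tendsto_nhdsWithin_of_tendsto_nhds (Continuous.tendsto' (by fun_prop) _ _ (by simp))
  refine ge_of_tendsto hlim (eventually_mem_nhdsWithin.mono fun δ (hδ : 0 < δ) => ?_)
  exact rev_prod_le_of_pos hw (by positivity) (by positivity)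
    (fun p hp => (hμ1 p hp).trans (by linarith)) (fun p hp => (hμ2 p hp).trans (by linarith))
    ha hb hac hbc

end RevenueBound

theorem stmt7_general (μ1 μ2 : Measure ℝ) [IsProbabilityMeasure μ1] [IsProbabilityMeasure μ2]
    {w : ℝ} (hw : (w - 1) * Real.exp w = 1) :
    sSup (menuRevenues (μ1.prod μ2)) ≤
      w * (sSup (priceRevenues μ1) + sSup (priceRevenues μ2)) := by
  have hw0 : 0 < w := one_pos.trans (one_lt_of_mul_exp_eq_one hw)
  have hnonneg : 0 ≤ w * (sSup (priceRevenues μ1) + sSup (priceRevenues μ2)) :=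
    mul_nonneg hw0.le (add_nonneg (sSup_priceRevenues_nonneg μ1) (sSup_priceRevenues_nonneg μ2))
  -- In `ℝ` the supremum of an unbounded set is `0`, so finiteness of `r1` and `r2` has to be
  -- deduced from that of `DRev`.
  by_cases hbdd : BddAbove (menuRevenues (μ1.prod μ2))
  · refine Real.sSup_le ?_ hnonneg
    rintro _ ⟨a, b, c, ha, hb, hc, rfl⟩
    exact rev_prod_le hw (fun p hp => le_csSup (bddAbove_priceRevenues_fst hbdd) ⟨p, hp, rfl⟩)
      (fun p hp => le_csSup (bddAbove_priceRevenues_snd hbdd) ⟨p, hp, rfl⟩) ha hb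
      ((le_max_left a b).trans hc) ((le_max_right a b).trans hc)
  · rwa [Real.sSup_of_not_bddAbove hbdd]

theorem stmt7 (μ1 μ2 : Measure ℝ) [IsProbabilityMeasure μ1] [IsProbabilityMeasure μ2]
    (h1 : μ1 (Set.Iio 0) = 0) (h2 : μ2 (Set.Iio 0) = 0)
    (r1 r2 w : ℝ) (hw : (w - 1) * Real.exp w = 1) (hw1 : 1 < w)
    (hr1 : sSup {x : ℝ | ∃ p : ℝ, 0 ≤ p ∧ x = p * (μ1 (Set.Ici p)).toReal} = r1)
    (hr2 : sSup {x : ℝ | ∃ p : ℝ, 0 ≤ p ∧ x = p * (μ2 (Set.Ici p)).toReal} = r2) :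
    sSup {r : ℝ | ∃ a b c : ℝ, 0 ≤ a ∧ 0 ≤ b ∧ max a b ≤ c ∧ r = rev (μ1.prod μ2) a b c}
      ≤ w * (r1 + r2) := by
  rw [← hr1, ← hr2]
  exact stmt7_general μ1 μ2 hw
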